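/- arXiv:2207.13546 — 4 statements merged into one kernel-verified Lean document; each statement's English description precedes it below -/
import Mathlib

section
/- Let M be the ℤ-module of all ℤ-linear maps φ : ℤ[s,s⁻¹] → ℤ such that φ((1−s)^N · f) = 0 for all Laurent polynomials f and some natural number N (depending on φ). Then: (i) for each k ∈ ℕ the map φ^k lies in M (indeed φ^k vanishes on the ideal (1−s)^{k+1}); and (ii) M is a free ℤ-module with basis {φ^k : k ∈ ℕ}, i.e. every element of M is a unique finite ℤ-linear combination of the maps φ^k. -/
open LaurentPolynomial

/-- A ℤ-linear map on Laurent polynomials is determined by its values on monomials. -/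
lemma LaurentPolynomial.linearMap_ext_T {ψ χ : LaurentPolynomial ℤ →ₗ[ℤ] ℤ}
    (h : ∀ n : ℤ, ψ (T n) = χ (T n)) : ψ = χ := by
  refine LinearMap.ext fun f => ?_
  induction f using LaurentPolynomial.induction_on' with
  | add p q hp hq => rw [map_add, map_add, hp, hq]
  | C_mul_T n a => rw [← smul_eq_C_mul, map_smul, map_smul, h]

/-- A ℤ-linear map killing the multiples of `1 - s` is a multiple of the augmentation. -/
lemma LaurentPolynomial.apply_T_eq_apply_one {ψ : LaurentPolynomial ℤ →ₗ[ℤ] ℤ}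
    (h : ∀ f, ψ ((1 - T 1) * f) = 0) (n : ℤ) : ψ (T n) = ψ 1 := by
  have step (m : ℤ) : ψ (T (m + 1)) = ψ (T m) := by
    have := h (T m)
    rw [sub_mul, one_mul, ← T_add, map_sub, add_comm] at this
    linarith
  induction n using Int.induction_on with
  | zero => rw [T_zero]
  | succ i ih => rw [step, ih]
  | pred i ih => rw [← ih, ← step, sub_add_cancel]

lemma choose_functional_zero_one_sub_T_mul {φk : ℕ → (LaurentPolynomial ℤ →ₗ[ℤ] ℤ)}
    (hφk : ∀ (k : ℕ) (n : ℤ), φk k (T n) = (-1) ^ k * Ring.choose n k)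
    (f : LaurentPolynomial ℤ) :
    φk 0 ((1 - T 1) * f) = 0 := by
  suffices φk 0 ∘ₗ LinearMap.mulLeft ℤ (1 - T 1) = 0 from LinearMap.congr_fun this f
  refine linearMap_ext_T fun n => ?_
  simp only [LinearMap.comp_apply, LinearMap.mulLeft_apply, sub_mul, one_mul, ← T_add, map_sub,
    hφk, Ring.choose_zero_right, sub_self, LinearMap.zero_apply]

lemma choose_functional_succ_one_sub_T_mul {φk : ℕ → (LaurentPolynomial ℤ →ₗ[ℤ] ℤ)}
    (hφk : ∀ (k : ℕ) (n : ℤ), φk k (T n) = (-1) ^ k * Ring.choose n k)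
    (k : ℕ) (f : LaurentPolynomial ℤ) :
    φk (k + 1) ((1 - T 1) * f) = φk k f := by
  suffices φk (k + 1) ∘ₗ LinearMap.mulLeft ℤ (1 - T 1) = φk k from LinearMap.congr_fun this f
  refine linearMap_ext_T fun n => ?_
  simp only [LinearMap.comp_apply, LinearMap.mulLeft_apply, sub_mul, one_mul, ← T_add, map_sub,
    hφk, add_comm 1 n, Ring.choose_succ_succ]
  ring

lemma choose_functional_add_one_sub_T_pow_mul {φk : ℕ → (LaurentPolynomial ℤ →ₗ[ℤ] ℤ)}
    (hφk : ∀ (k : ℕ) (n : ℤ), φk k (T n) = (-1) ^ k * Ring.choose n k)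
    (k j : ℕ) (f : LaurentPolynomial ℤ) :
    φk (k + j) ((1 - T 1) ^ j * f) = φk k f := by
  induction j with
  | zero => simp
  | succ j ih =>
    rw [pow_succ', mul_assoc, ← add_assoc, choose_functional_succ_one_sub_T_mul hφk, ih]

lemma choose_functional_one_sub_T_pow_mul_of_lt {φk : ℕ → (LaurentPolynomial ℤ →ₗ[ℤ] ℤ)}
    (hφk : ∀ (k : ℕ) (n : ℤ), φk k (T n) = (-1) ^ k * Ring.choose n k)
    {k j : ℕ} (h : k < j)
    (f : LaurentPolynomial ℤ) : φk k ((1 - T 1) ^ j * f) = 0 := by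
  obtain ⟨i, rfl⟩ := Nat.exists_eq_add_of_lt h
  have := choose_functional_add_one_sub_T_pow_mul hφk 0 k ((1 - T 1) * ((1 - T 1) ^ i * f))
  rw [choose_functional_zero_one_sub_T_mul hφk, zero_add] at this
  rw [← this]
  ring_nf

/-- The powers of `1 - s` are dual to the functionals `φ^k`. -/
lemma choose_functional_one_sub_T_pow {φk : ℕ → (LaurentPolynomial ℤ →ₗ[ℤ] ℤ)}
    (hφk : ∀ (k : ℕ) (n : ℤ), φk k (T n) = (-1) ^ k * Ring.choose n k)
    (k j : ℕ) :
    φk k ((1 - T 1) ^ j) = if k = j then 1 else 0 := by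
  rw [← mul_one ((1 - T 1) ^ j)]
  rcases lt_or_ge k j with h | h
  · rw [choose_functional_one_sub_T_pow_mul_of_lt hφk h, if_neg h.ne]
  · obtain ⟨i, rfl⟩ := Nat.exists_eq_add_of_le' h
    rw [choose_functional_add_one_sub_T_pow_mul hφk, ← T_zero, hφk]
    cases i <;> simp [Ring.choose_zero_succ]

lemma mem_span_range_choose_functional {φk : ℕ → (LaurentPolynomial ℤ →ₗ[ℤ] ℤ)}
    (hφk : ∀ (k : ℕ) (n : ℤ), φk k (T n) = (-1) ^ k * Ring.choose n k)
    (N : ℕ) (ψ : LaurentPolynomial ℤ →ₗ[ℤ] ℤ)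
    (hψ : ∀ f, ψ ((1 - T 1) ^ N * f) = 0) : ψ ∈ Submodule.span ℤ (Set.range φk) := by
  induction N generalizing ψ with
  | zero =>
    have : ψ = 0 := LinearMap.ext fun f => by simpa using hψ f
    exact this ▸ Submodule.zero_mem _
  | succ N ih =>
    have hN : φk N ∈ Submodule.span ℤ (Set.range φk) := Submodule.subset_span ⟨N, rfl⟩
    rw [← Submodule.sub_mem_iff_left _ (Submodule.smul_mem _ (ψ ((1 - T 1) ^ N)) hN)]
    refine ih _ fun f => ?_
    suffices ψ ∘ₗ LinearMap.mulLeft ℤ ((1 - T 1) ^ N) = ψ ((1 - T 1) ^ N) • φk 0 by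
      have h := LinearMap.congr_fun this f
      have h0 := choose_functional_add_one_sub_T_pow_mul hφk 0 N f
      rw [zero_add] at h0
      simpa [h0, sub_eq_zero] using h
    refine linearMap_ext_T fun n => ?_
    rw [apply_T_eq_apply_one (fun f => by simpa [pow_succ, mul_assoc] using hψ f)]
    simp [hφk]

lemma sum_smul_choose_functional_one_sub_T_pow {φk : ℕ → (LaurentPolynomial ℤ →ₗ[ℤ] ℤ)}
    (hφk : ∀ (k : ℕ) (n : ℤ), φk k (T n) = (-1) ^ k * Ring.choose n k)
    (c : ℕ →₀ ℤ) (j : ℕ) :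
    (c.sum fun k a => a • φk k) ((1 - T 1) ^ j) = c j := by
  simp [Finsupp.sum, LinearMap.sum_apply, choose_functional_one_sub_T_pow hφk, eq_comm]

/-- Let `M` be the ℤ-module of ℤ-linear maps `ψ : ℤ[s,s⁻¹] → ℤ` that kill
`(1-s)^N · f` for all `f` and some `N`.  The maps `φ^k` (determined on monomials by
`φ^k(sⁿ) = (-1)^k C(n,k)`) lie in `M` (indeed `φ^k` kills the ideal `(1-s)^(k+1)`), and
every element of `M` is a unique finite ℤ-linear combination of the `φ^k`. -/
theorem stmt_2 (φk : ℕ → (LaurentPolynomial ℤ →ₗ[ℤ] ℤ))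
    (hφk : ∀ (k : ℕ) (n : ℤ),
      φk k (LaurentPolynomial.T n) = (-1) ^ k * Ring.choose n k) :
    (∀ (k : ℕ) (f : LaurentPolynomial ℤ),
        φk k ((1 - LaurentPolynomial.T 1) ^ (k + 1) * f) = 0) ∧
    (∀ ψ : LaurentPolynomial ℤ →ₗ[ℤ] ℤ,
        (∃ N : ℕ, ∀ f : LaurentPolynomial ℤ,
            ψ ((1 - LaurentPolynomial.T 1) ^ N * f) = 0) →
        ∃! c : ℕ →₀ ℤ, ψ = c.sum fun k a => a • φk k) := by
  refine ⟨fun k f => choose_functional_one_sub_T_pow_mul_of_lt hφk k.lt_succ_self f, ?_⟩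
  rintro ψ ⟨N, hψ⟩
  obtain ⟨c, hc⟩ := Finsupp.mem_span_range_iff_exists_finsupp.1
    (mem_span_range_choose_functional hφk N ψ hψ)
  refine ⟨c, hc.symm, fun d hd => Finsupp.ext fun j => ?_⟩
  rw [← sum_smul_choose_functional_one_sub_T_pow hφk d,
    ← sum_smul_choose_functional_one_sub_T_pow hφk c, hc, ← hd]
end

section
/- Let F be a field. Then: (i) ρ_K(p) = 0 for every Laurent polynomial p ∈ F[z,z⁻¹]; and (ii) for all natural numbers n ≥ 1, k ≥ 0 and 0 ≤ a < n, one has ρ_K( z^{nk+a} / (1−zⁿ)^{k+1} ) = 1 if k = 0 and a = 0, and 0 otherwise. (That is, ρ_K satisfies the normalization constraints of a residue map for the K-theory of Deligne–Mumford stacks.) -/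
open scoped LaurentSeries

/-- The constant coefficient (coefficient of `z⁰`) of the formal Laurent-series expansion
at `z = 0` of a rational function. -/
noncomputable def laurentCoeffZero {F : Type*} [Field F] (f : RatFunc F) : F :=
  ((f : LaurentSeries F)).coeff 0

/-- The K-theoretic residue map `ρ_K(f) := (coeff of z⁰ of the expansion of f at 0) −
(coeff of z⁰ of the expansion at 0 of f(z⁻¹))`, where `f ↦ f(z⁻¹)` is the `F`-algebra
automorphism `ι` of `F(z)` with `ι(z) = z⁻¹`. -/
noncomputable def rhoK {F : Type*} [Field F] (ι : RatFunc F ≃ₐ[F] RatFunc F)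
    (f : RatFunc F) : F :=
  laurentCoeffZero f - laurentCoeffZero (ι f)

open scoped RatFunc in
lemma algebraMap_laurentSeries_C {F : Type*} [Field F] (a : F) :
    algebraMap (RatFunc F) F⸨X⸩ (RatFunc.C a) = HahnSeries.C a := by
  rw [← RatFunc.algebraMap_C, ← IsScalarTower.algebraMap_apply]
  simp

lemma laurentCoeffZero_add {F : Type*} [Field F] (f g : RatFunc F) :
    laurentCoeffZero (f + g) = laurentCoeffZero f + laurentCoeffZero g := by
  simp [laurentCoeffZero]

lemma laurentCoeffZero_C_mul {F : Type*} [Field F] (a : F) (f : RatFunc F) :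
    laurentCoeffZero (RatFunc.C a * f) = a * laurentCoeffZero f := by
  rw [laurentCoeffZero, map_mul, algebraMap_laurentSeries_C, HahnSeries.C_mul_eq_smul,
    HahnSeries.coeff_smul, smul_eq_mul, laurentCoeffZero]

lemma laurentCoeffZero_X_zpow {F : Type*} [Field F] (j : ℤ) :
    laurentCoeffZero (RatFunc.X ^ j : RatFunc F) = if j = 0 then 1 else 0 := by
  rw [laurentCoeffZero, map_zpow₀, RatFunc.coe_X, ← RatFunc.single_zpow, HahnSeries.coeff_single]
  simp only [eq_comm]

open scoped RatFunc in
lemma laurentCoeffZero_X_pow_div {F : Type*} [Field F] {n : ℕ} (hn : n ≠ 0) (m k : ℕ) :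
    laurentCoeffZero (RatFunc.X ^ m / (1 - RatFunc.X ^ n) ^ k : RatFunc F) =
      if m = 0 then 1 else 0 := by
  set u : PowerSeries F := (1 - PowerSeries.X ^ n) ^ k
  have hu : PowerSeries.constantCoeff u = 1 := by simp [u, hn]
  have hmul : u⁻¹ * u = 1 := PowerSeries.inv_mul_cancel u (by simp [hu])
  have hmap : HahnSeries.ofPowerSeries ℤ F u = (1 - HahnSeries.single 1 1 ^ n) ^ k := by
    simp only [u, map_pow, map_sub, map_one, PowerSeries.coe_X]
  have hexp : algebraMap (RatFunc F) F⸨X⸩ (RatFunc.X ^ m / (1 - RatFunc.X ^ n) ^ k) =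
      HahnSeries.ofPowerSeries ℤ F (PowerSeries.X ^ m * u⁻¹) := by
    have hinv : HahnSeries.ofPowerSeries ℤ F u⁻¹ * HahnSeries.ofPowerSeries ℤ F u = 1 := by
      rw [← map_mul, hmul, map_one]
    simp only [map_div₀, map_pow, map_sub, map_one, RatFunc.coe_X, map_mul, PowerSeries.coe_X]
    rw [← hmap, div_eq_mul_inv, eq_inv_of_mul_eq_one_left hinv]
  rw [laurentCoeffZero, hexp, PowerSeries.coeff_coe]
  simp [hu, zero_pow_eq]

lemma algEquiv_X_pow_div {F : Type*} [Field F] (ι : RatFunc F ≃ₐ[F] RatFunc F)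
    (hι : ι RatFunc.X = RatFunc.X⁻¹) {n a : ℕ} (ha : a < n) (k : ℕ) :
    ι (RatFunc.X ^ (n * k + a) / (1 - RatFunc.X ^ n) ^ (k + 1)) =
      RatFunc.C ((-1) ^ (k + 1)) * (RatFunc.X ^ (n - a) / (1 - RatFunc.X ^ n) ^ (k + 1)) := by
  have hX : (RatFunc.X : RatFunc F) ≠ 0 := RatFunc.X_ne_zero
  obtain ⟨b, rfl⟩ := Nat.exists_eq_add_of_le ha.le
  have hden : (1 - (RatFunc.X : RatFunc F)⁻¹ ^ (a + b)) =
      -1 * (1 - RatFunc.X ^ (a + b)) * (RatFunc.X ^ (a + b))⁻¹ := by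
    rw [inv_pow]
    field_simp
    ring
  have hnum : (RatFunc.X : RatFunc F)⁻¹ ^ ((a + b) * k + a) =
      RatFunc.X ^ b * ((RatFunc.X ^ (a + b))⁻¹) ^ (k + 1) := by
    rw [inv_pow, inv_pow]
    field_simp
    ring
  have hsign : ((-1 : RatFunc F) ^ (k + 1))⁻¹ = (-1) ^ (k + 1) := by
    rw [← inv_pow, inv_neg_one]
  have hpow : ((RatFunc.X ^ (a + b) : RatFunc F)⁻¹) ^ (k + 1) ≠ 0 := pow_ne_zero _ (inv_ne_zero (pow_ne_zero _ hX))
  simp only [map_div₀, map_pow, map_sub, map_one, map_neg, hι]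
  rw [hden, hnum, mul_pow, mul_pow, mul_div_mul_right _ _ hpow, Nat.add_sub_cancel_left,
    div_eq_mul_inv, mul_inv, hsign, div_eq_mul_inv]
  ring

/-- (i) `ρ_K` vanishes on every Laurent polynomial `Σ_j c_j z^j`; and
(ii) for `n ≥ 1`, `k ≥ 0`, `0 ≤ a < n`, `ρ_K(z^{nk+a}/(1-zⁿ)^{k+1})` equals `1` if
`k = a = 0` and `0` otherwise. -/
theorem stmt_11 {F : Type*} [Field F] (ι : RatFunc F ≃ₐ[F] RatFunc F)
    (hι : ι RatFunc.X = RatFunc.X⁻¹) :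
    (∀ p : ℤ →₀ F,
        rhoK ι (p.sum fun j a => RatFunc.C a * RatFunc.X ^ j) = 0) ∧
    ∀ n : ℕ, 1 ≤ n → ∀ k a : ℕ, a < n →
      rhoK ι (RatFunc.X ^ (n * k + a) / (1 - RatFunc.X ^ n) ^ (k + 1))
        = if k = 0 ∧ a = 0 then 1 else 0 := by
  constructor
  · intro p
    induction p using Finsupp.induction_linear with
    | zero => simp [rhoK, laurentCoeffZero]
    | add f g hf hg =>
      rw [Finsupp.sum_add_index' (by simp) (by simp [add_mul])]
      simp only [rhoK, map_add, laurentCoeffZero_add] at hf hg ⊢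
      linear_combination hf + hg
    | single j a =>
      have hC : ι (RatFunc.C a) = RatFunc.C a := by
        rw [← RatFunc.algebraMap_eq_C, AlgEquiv.commutes]
      rw [Finsupp.sum_single_index (by simp), rhoK, map_mul, hC, map_zpow₀, hι, inv_zpow',
        laurentCoeffZero_C_mul, laurentCoeffZero_C_mul, laurentCoeffZero_X_zpow,
        laurentCoeffZero_X_zpow]
      simp
  · intro n hn k a ha
    have hn0 : n ≠ 0 := by omega
    have hna : n - a ≠ 0 := by omega
    rw [rhoK, algEquiv_X_pow_div ι hι ha, laurentCoeffZero_C_mul,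
      laurentCoeffZero_X_pow_div hn0, laurentCoeffZero_X_pow_div hn0, if_neg hna]
    simp [hn0]
end

section
/- For all natural numbers a, b, c, all symmetric Laurent polynomials f ∈ S_a^±, g ∈ S_b^±, h ∈ S_c^±, and formal variables z, w, the weak associativity identity Y(Y(f,z)g, w)h = Y(f,zw)(Y(g,w)h) holds in S_{a+b+c}^±[z,z⁻¹,w,w⁻¹]. -/
open scoped BigOperators

noncomputable section

/-- `L n` is the ring of Laurent polynomials over `ℚ` in the `n` variables `s₁, …, s_n`,
realized as the monoid algebra of the exponent group `Fin n → ℤ`. -/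
abbrev L (n : ℕ) : Type := AddMonoidAlgebra ℚ (Fin n → ℤ)

/-- `LL n A` is the ring of Laurent polynomials over `ℚ` in the variables `s₁, …, s_n`
together with extra formal variables whose exponents lie in the abelian group `A`
(e.g. `A = ℤ` for one variable `z`, `A = ℤ × ℤ` for two variables `z, w`). -/
abbrev LL (n : ℕ) (A : Type) [AddCommGroup A] : Type :=
  AddMonoidAlgebra ℚ ((Fin n → ℤ) × A)

/-- The ring homomorphism between monoid algebras induced by a map of exponent groups. -/
def mdr {G H : Type} [AddCommMonoid G] [AddCommMonoid H] (f : G →+ H) :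
    AddMonoidAlgebra ℚ G →+* AddMonoidAlgebra ℚ H :=
  AddMonoidAlgebra.mapDomainRingHom ℚ f

/-- The action of a permutation `σ` of the variables on exponents: `s_i ↦ s_{σ(i)}`. -/
def permHomL {n : ℕ} (σ : Equiv.Perm (Fin n)) : (Fin n → ℤ) →+ (Fin n → ℤ) :=
  AddMonoidHom.mk' (fun μ => μ ∘ σ.symm) (fun _ _ => rfl)

/-- The action of a permutation of the variables `s₁, …, s_n` on `L n`. -/
def permL {n : ℕ} (σ : Equiv.Perm (Fin n)) : L n →+* L n := mdr (permHomL σ)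

/-- A Laurent polynomial in `s₁, …, s_n` is symmetric if it is fixed by all permutations
of the variables; `SymmLaurent f` says `f ∈ S_n^±`. -/
def SymmLaurent {n : ℕ} (f : L n) : Prop := ∀ σ : Equiv.Perm (Fin n), permL σ f = f

/-- Permutations act on `LL n A` through the `s`-exponents only. -/
def permHomLL {n : ℕ} {A : Type} [AddCommGroup A] (σ : Equiv.Perm (Fin n)) :
    ((Fin n → ℤ) × A) →+ ((Fin n → ℤ) × A) :=
  AddMonoidHom.mk' (fun p => (p.1 ∘ σ.symm, p.2)) (fun _ _ => rfl)

/-- The action of a permutation of the variables on `LL n A`. -/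
def permLL {n : ℕ} {A : Type} [AddCommGroup A] (σ : Equiv.Perm (Fin n)) :
    LL n A →+* LL n A := mdr (permHomLL σ)

/-- Extension by zero of an exponent vector on the first `a` of `a + b` variables. -/
def extA (a b : ℕ) (μ : Fin a → ℤ) : Fin (a + b) → ℤ :=
  fun i => if h : (i : ℕ) < a then μ ⟨i, h⟩ else 0

/-- Extension by zero of an exponent vector on the last `b` of `a + b` variables. -/
def extB (a b : ℕ) (ν : Fin b → ℤ) : Fin (a + b) → ℤ :=
  fun i => if _ : (i : ℕ) < a then 0 else ν ⟨(i : ℕ) - a, by have := i.isLt; omega⟩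

lemma extA_add (a b : ℕ) (μ ν : Fin a → ℤ) :
    extA a b (μ + ν) = extA a b μ + extA a b ν := by
  funext i
  simp only [extA, Pi.add_apply]
  split <;> simp

lemma extB_add (a b : ℕ) (μ ν : Fin b → ℤ) :
    extB a b (μ + ν) = extB a b μ + extB a b ν := by
  funext i
  simp only [extB, Pi.add_apply]
  split <;> simp

/-- On exponents, the substitution `f(s₁,…,s_a) ↦ f(z s₁, …, z s_a)` followed by the
inclusion into the first `a` of `a + b` variables: a monomial `s^μ z^α` is sent to
`s^(extA μ) z^(α + (Σᵢ μᵢ)·zv)`, where `zv : A` is the exponent vector of `z`. -/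
def zinjHom {A : Type} [AddCommGroup A] (zv : A) (a b : ℕ) :
    ((Fin a → ℤ) × A) →+ ((Fin (a + b) → ℤ) × A) :=
  AddMonoidHom.mk' (fun p => (extA a b p.1, p.2 + (∑ i, p.1 i) • zv))
    (by
      intro p q
      refine Prod.ext (extA_add a b p.1 q.1) ?_
      simp only [Prod.snd_add]
      show p.2 + q.2 + (∑ i, (p.1 i + q.1 i)) • zv = _
      rw [Finset.sum_add_distrib, add_smul]
      abel)

/-- On exponents, the inclusion of the last `b` of `a + b` variables. -/
def winjHom {A : Type} [AddCommGroup A] (a b : ℕ) :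
    ((Fin b → ℤ) × A) →+ ((Fin (a + b) → ℤ) × A) :=
  AddMonoidHom.mk' (fun p => (extB a b p.1, p.2))
    (fun p q => Prod.ext (extB_add a b p.1 q.1) rfl)

/-- The inclusion `L n → LL n A` (no formal-variable exponents). -/
def inclz (A : Type) [AddCommGroup A] {n : ℕ} : L n →+* LL n A :=
  mdr (AddMonoidHom.inl (Fin n → ℤ) A)

/-- The vertex operation
`Y(f,z)g = (1/(a!·b!)) Σ_{σ ∈ S_{a+b}} σ·(f(z s₁,…,z s_a)·g(s_{a+1},…,s_{a+b}))`,
where the formal variable `z` has exponent vector `zv : A` and `Y` acts coefficientwise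
on Laurent-polynomial coefficients in additional formal variables. -/
def Yop {A : Type} [AddCommGroup A] (zv : A) {a b : ℕ}
    (f : LL a A) (g : LL b A) : LL (a + b) A :=
  ((a.factorial * b.factorial : ℚ))⁻¹ •
    ∑ σ : Equiv.Perm (Fin (a + b)),
      permLL σ (mdr (zinjHom zv a b) f * mdr (winjHom a b) g)

/-- Relabelling of the variables along an equality `m = n` of their number. -/
def reindexEquiv (A : Type) [AddCommGroup A] {m n : ℕ} (h : m = n) :
    ((Fin m → ℤ) × A) ≃+ ((Fin n → ℤ) × A) where
  toFun p := (p.1 ∘ (finCongr h).symm, p.2)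
  invFun p := (p.1 ∘ (finCongr h), p.2)
  left_inv p := by
    refine Prod.ext ?_ rfl
    funext i
    simp [Function.comp]
  right_inv p := by
    refine Prod.ext ?_ rfl
    funext i
    simp [Function.comp]
  map_add' _ _ := rfl

/-- The canonical identification `LL m A ≃ LL n A` for `m = n`. -/
def reindex (A : Type) [AddCommGroup A] {m n : ℕ} (h : m = n) :
    LL m A →+* LL n A := mdr (reindexEquiv A h).toAddMonoidHom

/-- The operator `z^{deg}`, multiplying each monomial `s₁^{μ₁}⋯s_n^{μ_n}` by
`z^{μ₁+⋯+μ_n}` (with `A = ℤ` recording the exponent of the single variable `z`). -/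
def zdegOp {n : ℕ} : LL n ℤ →+* LL n ℤ :=
  mdr (AddMonoidHom.mk' (fun p => (p.1, p.2 + ∑ i, p.1 i))
    (by
      intro p q
      refine Prod.ext rfl ?_
      simp only [Prod.snd_add]
      show p.2 + q.2 + ∑ i, (p.1 i + q.1 i) = p.2 + ∑ i, p.1 i + (q.2 + ∑ i, q.1 i)
      rw [Finset.sum_add_distrib]
      ring))

end

lemma extA_castAdd (a b : ℕ) (μ : Fin a → ℤ) (i : Fin a) :
    extA a b μ (Fin.castAdd b i) = μ i := by
  simp [extA]

lemma extA_natAdd (a b : ℕ) (μ : Fin a → ℤ) (j : Fin b) :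
    extA a b μ (Fin.natAdd a j) = 0 := by
  simp [extA]

lemma extB_castAdd (a b : ℕ) (ν : Fin b → ℤ) (i : Fin a) :
    extB a b ν (Fin.castAdd b i) = 0 := by
  simp [extB]

lemma extB_natAdd (a b : ℕ) (ν : Fin b → ℤ) (j : Fin b) :
    extB a b ν (Fin.natAdd a j) = ν j := by
  simp [extB]

lemma sum_extA (a b : ℕ) (μ : Fin a → ℤ) : ∑ i, extA a b μ i = ∑ i, μ i := by
  simp [Fin.sum_univ_add, extA_castAdd, extA_natAdd]

lemma sum_extB (a b : ℕ) (ν : Fin b → ℤ) : ∑ i, extB a b ν i = ∑ i, ν i := by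
  simp [Fin.sum_univ_add, extB_castAdd, extB_natAdd]

lemma mdr_mdr {G H K : Type} [AddCommMonoid G] [AddCommMonoid H] [AddCommMonoid K]
    (φ : H →+ K) (ψ : G →+ H) (x : AddMonoidAlgebra ℚ G) :
    mdr φ (mdr ψ x) = mdr (φ.comp ψ) x := by
  simp [mdr, AddMonoidAlgebra.mapDomainRingHom_comp]

/-- The block permutation of `a + b` variables given by permutations of the first `a` and of the
last `b` variables. -/
def blockPerm {a b : ℕ} (σ : Equiv.Perm (Fin a)) (τ : Equiv.Perm (Fin b)) :
    Equiv.Perm (Fin (a + b)) :=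
  finSumFinEquiv.permCongr (Equiv.sumCongr σ τ)

lemma blockPerm_symm_castAdd {a b : ℕ} (σ : Equiv.Perm (Fin a)) (τ : Equiv.Perm (Fin b))
    (i : Fin a) : (blockPerm σ τ).symm (Fin.castAdd b i) = Fin.castAdd b (σ.symm i) := by
  simp [Equiv.symm_apply_eq, blockPerm, Equiv.permCongr_apply]

lemma blockPerm_symm_natAdd {a b : ℕ} (σ : Equiv.Perm (Fin a)) (τ : Equiv.Perm (Fin b))
    (j : Fin b) : (blockPerm σ τ).symm (Fin.natAdd a j) = Fin.natAdd a (τ.symm j) := by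
  simp [Equiv.symm_apply_eq, blockPerm, Equiv.permCongr_apply]

section

variable {A : Type} [AddCommGroup A]

lemma permLL_permLL {n : ℕ} (σ τ : Equiv.Perm (Fin n)) (x : LL n A) :
    permLL σ (permLL τ x) = permLL (σ * τ) x :=
  mdr_mdr _ _ x

lemma zinj_permLL (zv : A) {a b : ℕ} (σ : Equiv.Perm (Fin a)) (τ : Equiv.Perm (Fin b))
    (x : LL a A) :
    mdr (zinjHom zv a b) (permLL σ x) = permLL (blockPerm σ τ) (mdr (zinjHom zv a b) x) := by
  rw [permLL, permLL, mdr_mdr, mdr_mdr]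
  congr 1
  congr 1
  refine AddMonoidHom.ext fun p => Prod.ext (funext fun i => ?_) ?_
  · change extA a b (p.1 ∘ σ.symm) i = extA a b p.1 ((blockPerm σ τ).symm i)
    refine Fin.addCases (fun i => ?_) (fun j => ?_) i
    · simp [blockPerm_symm_castAdd, extA_castAdd]
    · simp [blockPerm_symm_natAdd, extA_natAdd]
  · change p.2 + (∑ i, p.1 (σ.symm i)) • zv = p.2 + (∑ i, p.1 i) • zv
    rw [Equiv.sum_comp σ.symm p.1]

lemma winj_permLL {a b : ℕ} (σ : Equiv.Perm (Fin a)) (τ : Equiv.Perm (Fin b)) (x : LL b A) :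
    mdr (winjHom a b) (permLL τ x) = permLL (blockPerm σ τ) (mdr (winjHom a b) x) := by
  rw [permLL, permLL, mdr_mdr, mdr_mdr]
  congr 1
  congr 1
  refine AddMonoidHom.ext fun p => Prod.ext (funext fun i => ?_) rfl
  change extB a b (p.1 ∘ τ.symm) i = extB a b p.1 ((blockPerm σ τ).symm i)
  refine Fin.addCases (fun i => ?_) (fun j => ?_) i
  · simp [blockPerm_symm_castAdd, extB_castAdd]
  · simp [blockPerm_symm_natAdd, extB_natAdd]

/-- `Y(f,z)g` only depends on the orbits of `f` and `g` under permutations of the variables. -/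
lemma Yop_permLL (zv : A) {a b : ℕ} (σ : Equiv.Perm (Fin a)) (τ : Equiv.Perm (Fin b))
    (f : LL a A) (g : LL b A) : Yop zv (permLL σ f) (permLL τ g) = Yop zv f g := by
  simp only [Yop, zinj_permLL zv σ τ, winj_permLL σ τ, ← map_mul, permLL_permLL]
  congr 1
  exact Equiv.sum_comp (Equiv.mulRight (blockPerm σ τ))
    fun ρ => permLL ρ (mdr (zinjHom zv a b) f * mdr (winjHom a b) g)

lemma permLL_one {n : ℕ} (x : LL n A) : permLL 1 x = x := by
  have h : permHomLL (A := A) (1 : Equiv.Perm (Fin n)) = AddMonoidHom.id _ := rfl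
  rw [permLL, h]
  simp [mdr]

lemma Yop_permLL_left (zv : A) {a b : ℕ} (σ : Equiv.Perm (Fin a)) (f : LL a A) (g : LL b A) :
    Yop zv (permLL σ f) g = Yop zv f g := by
  simpa only [permLL_one] using Yop_permLL zv σ 1 f g

lemma Yop_permLL_right (zv : A) {a b : ℕ} (τ : Equiv.Perm (Fin b)) (f : LL a A) (g : LL b A) :
    Yop zv f (permLL τ g) = Yop zv f g := by
  simpa only [permLL_one] using Yop_permLL zv 1 τ f g

lemma Yop_smul_left (zv : A) {a b : ℕ} (q : ℚ) (f : LL a A) (g : LL b A) :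
    Yop zv (q • f) g = q • Yop zv f g := by
  simp only [Yop, map_rat_smul, smul_mul_assoc, ← Finset.smul_sum]
  rw [smul_comm]

lemma Yop_smul_right (zv : A) {a b : ℕ} (q : ℚ) (f : LL a A) (g : LL b A) :
    Yop zv f (q • g) = q • Yop zv f g := by
  simp only [Yop, map_rat_smul, mul_smul_comm, ← Finset.smul_sum]
  rw [smul_comm]

lemma Yop_sum_left (zv : A) {a b : ℕ} {ι : Type} (s : Finset ι) (f : ι → LL a A) (g : LL b A) :
    Yop zv (∑ i ∈ s, f i) g = ∑ i ∈ s, Yop zv (f i) g := by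
  simp only [Yop, map_sum, Finset.sum_mul, ← Finset.smul_sum]
  rw [Finset.sum_comm]

lemma Yop_sum_right (zv : A) {a b : ℕ} {ι : Type} (s : Finset ι) (f : LL a A) (g : ι → LL b A) :
    Yop zv f (∑ i ∈ s, g i) = ∑ i ∈ s, Yop zv f (g i) := by
  simp only [Yop, map_sum, Finset.mul_sum, ← Finset.smul_sum]
  rw [Finset.sum_comm]

lemma Yop_Yop_left (z w : A) {a b c : ℕ} (f : LL a A) (g : LL b A) (h : LL c A) :
    Yop w (Yop z f g) h =
      ((a.factorial * b.factorial * c.factorial : ℚ))⁻¹ •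
        ∑ σ : Equiv.Perm (Fin (a + b + c)),
          permLL σ (mdr (zinjHom w (a + b) c)
            (mdr (zinjHom z a b) f * mdr (winjHom a b) g) * mdr (winjHom (a + b) c) h) := by
  rw [Yop.eq_1 z, Yop_smul_left, Yop_sum_left]
  simp only [Yop_permLL_left, Finset.sum_const, Finset.card_univ, Fintype.card_perm,
    Fintype.card_fin]
  rw [Yop, ← Nat.cast_smul_eq_nsmul ℚ, smul_smul, smul_smul]
  congr 1
  have := Nat.factorial_ne_zero (a + b)
  field_simp

lemma Yop_Yop_right (z w : A) {a b c : ℕ} (f : LL a A) (g : LL b A) (h : LL c A) :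
    Yop z f (Yop w g h) =
      ((a.factorial * b.factorial * c.factorial : ℚ))⁻¹ •
        ∑ σ : Equiv.Perm (Fin (a + (b + c))),
          permLL σ (mdr (zinjHom z a (b + c)) f * mdr (winjHom a (b + c))
            (mdr (zinjHom w b c) g * mdr (winjHom b c) h)) := by
  rw [Yop.eq_1 w, Yop_smul_right, Yop_sum_right]
  simp only [Yop_permLL_right, Finset.sum_const, Finset.card_univ, Fintype.card_perm,
    Fintype.card_fin]
  rw [Yop, ← Nat.cast_smul_eq_nsmul ℚ, smul_smul, smul_smul]
  congr 1
  have := Nat.factorial_ne_zero (b + c)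
  field_simp

lemma reindex_permLL {m n : ℕ} (e : m = n) (σ : Equiv.Perm (Fin m)) (x : LL m A) :
    reindex A e (permLL σ x) = permLL ((finCongr e).permCongr σ) (reindex A e x) := by
  subst e
  rw [reindex, permLL, permLL, mdr_mdr, mdr_mdr]
  rfl

lemma reindex_zinj_zinj (z w : A) (a b c : ℕ) (f : LL a A) :
    reindex A (Nat.add_assoc a b c) (mdr (zinjHom w (a + b) c) (mdr (zinjHom z a b) f)) =
      mdr (zinjHom (z + w) a (b + c)) f := by
  rw [reindex, mdr_mdr, mdr_mdr]
  congr 1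
  congr 1
  refine AddMonoidHom.ext fun p => Prod.ext (funext fun i => ?_) ?_
  · change extA (a + b) c (extA a b p.1) (Fin.cast (Nat.add_assoc a b c).symm i) = extA a (b + c) p.1 i
    simp only [extA, Fin.val_cast]
    split_ifs <;> first | rfl | omega
  · change p.2 + (∑ i, p.1 i) • z + (∑ i, extA a b p.1 i) • w = p.2 + (∑ i, p.1 i) • (z + w)
    rw [sum_extA, smul_add, add_assoc]

lemma reindex_zinj_winj (w : A) (a b c : ℕ) (g : LL b A) :
    reindex A (Nat.add_assoc a b c) (mdr (zinjHom w (a + b) c) (mdr (winjHom a b) g)) =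
      mdr (winjHom a (b + c)) (mdr (zinjHom w b c) g) := by
  rw [reindex, mdr_mdr, mdr_mdr, mdr_mdr]
  congr 1
  congr 1
  refine AddMonoidHom.ext fun p => Prod.ext (funext fun i => ?_) ?_
  · change extA (a + b) c (extB a b p.1) (Fin.cast (Nat.add_assoc a b c).symm i) = extB a (b + c) (extA b c p.1) i
    simp only [extA, extB, Fin.val_cast]
    split_ifs <;> first | rfl | omega
  · change p.2 + (∑ i, extB a b p.1 i) • w = p.2 + (∑ i, p.1 i) • w
    rw [sum_extB]

lemma reindex_winj (a b c : ℕ) (h : LL c A) :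
    reindex A (Nat.add_assoc a b c) (mdr (winjHom (a + b) c) h) =
      mdr (winjHom a (b + c)) (mdr (winjHom b c) h) := by
  rw [reindex, mdr_mdr, mdr_mdr]
  congr 1
  congr 1
  refine AddMonoidHom.ext fun p => Prod.ext (funext fun i => ?_) rfl
  change extB (a + b) c p.1 (Fin.cast (Nat.add_assoc a b c).symm i) = extB a (b + c) (extB b c p.1) i
  simp only [extB, Fin.val_cast]
  split_ifs <;> first | rfl | omega | exact congrArg p.1 (Fin.ext (Nat.sub_add_eq _ _ _))

/-- Weak associativity of `Y`, for arbitrary coefficients and without symmetry assumptions. -/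
theorem reindex_Yop_Yop (z w : A) {a b c : ℕ} (f : LL a A) (g : LL b A) (h : LL c A) :
    reindex A (Nat.add_assoc a b c) (Yop w (Yop z f g) h) = Yop (z + w) f (Yop w g h) := by
  rw [Yop_Yop_left, Yop_Yop_right, map_rat_smul, map_sum]
  simp only [reindex_permLL, map_mul, reindex_zinj_zinj, reindex_zinj_winj, reindex_winj]
  congr 1
  rw [← Equiv.sum_comp (finCongr (Nat.add_assoc a b c)).permCongr]
  simp only [mul_assoc]

end

/-- Weak associativity `Y(Y(f,z)g, w)h = Y(f,zw)(Y(g,w)h)` in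
`S_{a+b+c}^±[z,z⁻¹,w,w⁻¹]`, for symmetric Laurent polynomials `f ∈ S_a^±`, `g ∈ S_b^±`,
`h ∈ S_c^±`.  Here the exponents of `(z,w)` lie in `ℤ × ℤ`, so `z` has exponent vector
`(1,0)`, `w` has `(0,1)` and `zw` has `(1,1)`, and `Fin ((a+b)+c)` is identified with
`Fin (a+(b+c))` by `reindex`. -/
theorem stmt_15 (a b c : ℕ) (f : L a) (g : L b) (h : L c)
    (hf : SymmLaurent f) (hg : SymmLaurent g) (hh : SymmLaurent h) :
    reindex (ℤ × ℤ) (Nat.add_assoc a b c)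
        (Yop ((0, 1) : ℤ × ℤ)
          (Yop ((1, 0) : ℤ × ℤ) (inclz (ℤ × ℤ) f) (inclz (ℤ × ℤ) g))
          (inclz (ℤ × ℤ) h))
      = Yop ((1, 1) : ℤ × ℤ) (inclz (ℤ × ℤ) f)
          (Yop ((0, 1) : ℤ × ℤ) (inclz (ℤ × ℤ) g) (inclz (ℤ × ℤ) h)) := by
  simpa only [Prod.mk_add_mk, add_zero, zero_add] using
    reindex_Yop_Yop ((1, 0) : ℤ × ℤ) (0, 1) (inclz _ f) (inclz _ g) (inclz _ h)
end

section
/- For all natural numbers a, b and all symmetric Laurent polynomials f ∈ S_a^±, g ∈ S_b^±, the skew-symmetry identity Y(f,z)g = z^{deg}( Y(g,z⁻¹)f ) holds in S_{a+b}^±[z,z⁻¹], where Y(g,z⁻¹)f is obtained from Y(g,w)f by substituting w = z⁻¹. -/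
open scoped BigOperators

lemma extB_finAddFlip (a b : ℕ) (ν : Fin b → ℤ) (i : Fin (b + a)) :
    extB a b ν (finAddFlip i) = extA b a ν i := by
  induction i using Fin.addCases <;> simp [extA, extB]

lemma extA_finAddFlip (a b : ℕ) (μ : Fin a → ℤ) (i : Fin (b + a)) :
    extA a b μ (finAddFlip i) = extB b a μ i := by
  induction i using Fin.addCases <;> simp [extA, extB]

lemma mdr_smul {G H : Type} [AddCommMonoid G] [AddCommMonoid H] (φ : G →+ H) (q : ℚ)
    (x : AddMonoidAlgebra ℚ G) : mdr φ (q • x) = q • mdr φ x :=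
  map_rat_smul (mdr φ) q x

/-- The bijection `S_{b+a} ≃ S_{a+b}` composing with the swap of the two blocks of variables. -/
def blockSwapPerm (a b : ℕ) : Equiv.Perm (Fin (b + a)) ≃ Equiv.Perm (Fin (a + b)) :=
  Equiv.equivCongr finAddFlip (finCongr (Nat.add_comm b a))

/-- The first factor of `Y(g,z⁻¹)f`, permuted by `τ`, becomes after `z^{deg}` the second factor
of `Y(f,z)g`, permuted by the permutation matching `τ`. -/
lemma reindex_zdegOp_permLL_zinj (a b : ℕ) (τ : Equiv.Perm (Fin (b + a))) (g : L b) :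
    reindex ℤ (Nat.add_comm b a)
        (zdegOp (permLL τ (mdr (zinjHom (-1 : ℤ) b a) (inclz ℤ g))))
      = permLL (blockSwapPerm a b τ) (mdr (winjHom a b) (inclz ℤ g)) := by
  simp only [reindex, zdegOp, permLL, inclz, mdr_mdr]
  congr 2
  refine AddMonoidHom.ext fun ν => Prod.ext (funext fun i => ?_) ?_
  · exact (extB_finAddFlip a b ν (τ.symm ((finCongr (Nat.add_comm b a)).symm i))).symm
  · have h := (Equiv.sum_comp τ.symm (extA b a ν)).trans (sum_extA b a ν)
    simp [zinjHom, winjHom, permHomLL, reindexEquiv, h]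

/-- The second factor of `Y(g,z⁻¹)f`, permuted by `τ`, becomes after `z^{deg}` the first factor
of `Y(f,z)g`, permuted by the permutation matching `τ`. -/
lemma reindex_zdegOp_permLL_winj (a b : ℕ) (τ : Equiv.Perm (Fin (b + a))) (f : L a) :
    reindex ℤ (Nat.add_comm b a)
        (zdegOp (permLL τ (mdr (winjHom b a) (inclz ℤ f))))
      = permLL (blockSwapPerm a b τ) (mdr (zinjHom (1 : ℤ) a b) (inclz ℤ f)) := by
  simp only [reindex, zdegOp, permLL, inclz, mdr_mdr]
  congr 2
  refine AddMonoidHom.ext fun μ => Prod.ext (funext fun i => ?_) ?_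
  · exact (extA_finAddFlip a b μ (τ.symm ((finCongr (Nat.add_comm b a)).symm i))).symm
  · have h := (Equiv.sum_comp τ.symm (extB b a μ)).trans (sum_extB b a μ)
    simp [zinjHom, winjHom, permHomLL, reindexEquiv, h]

/-- Skew symmetry `Y(f,z)g = z^{deg}(Y(g,z⁻¹)f)` in `S_{a+b}^±[z,z⁻¹]`,
for symmetric Laurent polynomials `f ∈ S_a^±` and `g ∈ S_b^±`.  Here the exponent of `z`
lies in `ℤ`, `Y(g,z⁻¹)f` is the vertex operation with `z`-exponent vector `-1`, and
`Fin (b+a)` is identified with `Fin (a+b)` by `reindex`. -/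
theorem stmt_16 (a b : ℕ) (f : L a) (g : L b)
    (hf : SymmLaurent f) (hg : SymmLaurent g) :
    Yop (1 : ℤ) (inclz ℤ f) (inclz ℤ g)
      = reindex ℤ (Nat.add_comm b a)
          (zdegOp (Yop (-1 : ℤ) (inclz ℤ g) (inclz ℤ f))) := by
  have smul_out (q : ℚ) (x : LL (b + a) ℤ) :
      reindex ℤ (Nat.add_comm b a) (zdegOp (q • x))
        = q • reindex ℤ (Nat.add_comm b a) (zdegOp x) := by
    simp only [reindex, zdegOp, mdr_smul]
  rw [Yop, Yop, smul_out, mul_comm (b.factorial : ℚ), map_sum, map_sum,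
    ← Equiv.sum_comp (blockSwapPerm a b)]
  congr 1
  refine Finset.sum_congr rfl fun τ _ => ?_
  simp only [map_mul, reindex_zdegOp_permLL_zinj, reindex_zdegOp_permLL_winj]
  exact mul_comm _ _
end
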